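/- arXiv:2407.02365 — 3 statements merged into one kernel-verified Lean document; each statement's English description precedes it below -/
import Mathlib

section
/- Let N ≥ 1 be an integer and let s, w, a₁, …, a_N ∈ ℂ satisfy Re(s) > N, Re(w) > 0, and Re(a_j) > 0 for j = 1, …, N. Then ζ_N(s, w | a₁,…,a_N) = (1/Γ(s)) ∫₀^∞ u^{s−1} e^{−wu} ∏_{j=1}^N (1 − e^{−a_j u})^{−1} du, and likewise ζ̃_N(s, w | a₁,…,a_N) = (1/Γ(s)) ∫₀^∞ u^{s−1} e^{−wu} ∏_{j=1}^N (1 + e^{−a_j u})^{−1} du. -/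
/-!
Expand each factor `(1 - ε e ^ (-a_j u))⁻¹` (with `ε = 1` or `ε = -1`) as a geometric series. The
product is then a series over multi-indices `n` (`hasSum_geom_pi`) and the integrand becomes
`∑ ε ^ |n| u ^ (s - 1) e ^ (-(w + n · a) u)`. Integrating term by term, the Gamma integral
`∫ u ^ (s - 1) e ^ (-z u) du = Γ(s) z ^ (-s)` for `Re z > 0` (`laplace_cpow`) gives the Barnes
series.

The interchange is justified by dominated convergence (`hasSum_barnes`): the absolute values of the
terms sum to `u ^ (Re s - 1) e ^ (-Re w u) ∏ (1 - e ^ (-Re a_j u))⁻¹`, which is integrable because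
each factor is at most a constant times `e ^ (c u) / u` for any `c > 0` (`inv_one_sub_exp_le`), while
`Re s > N`; the choice `N c = Re w / 2` keeps exponential decay at infinity.
-/


open MeasureTheory

/-- The Barnes zeta function `ζ_N(s, w | a₁,…,a_N)`. -/
noncomputable def barnesZeta (N : ℕ) (s w : ℂ) (a : Fin N → ℂ) : ℂ :=
  ∑' n : Fin N → ℕ, (w + ∑ j, (n j : ℂ) * a j) ^ (-s)

/-- The alternating Barnes zeta function `ζ̃_N(s, w | a₁,…,a_N)`. -/
noncomputable def barnesZetaAlt (N : ℕ) (s w : ℂ) (a : Fin N → ℂ) : ℂ :=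
  ∑' n : Fin N → ℕ, (-1 : ℂ) ^ (∑ j, n j) * (w + ∑ j, (n j : ℂ) * a j) ^ (-s)

lemma integrableOn_rpow_mul_exp {σ c : ℝ} (hσ : 0 < σ) (hc : 0 < c) :
    IntegrableOn (fun u : ℝ => u ^ (σ - 1) * Real.exp (-c * u)) (Set.Ioi 0) := by
  have := integrableOn_rpow_mul_exp_neg_mul_rpow (p := 1) (s := σ - 1) (b := c)
    (by linarith) one_pos hc
  simpa using this

lemma norm_cpow_mul_exp (s z : ℂ) {u : ℝ} (hu : 0 < u) :
    ‖(u : ℂ) ^ (s - 1) * Complex.exp (-z * u)‖ = u ^ (s.re - 1) * Real.exp (-z.re * u) := by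
  rw [norm_mul, Complex.norm_cpow_eq_rpow_re_of_pos hu, Complex.norm_exp]
  simp

lemma aestronglyMeasurable_cpow_mul_exp (s z : ℂ) :
    AEStronglyMeasurable (fun u : ℝ => (u : ℂ) ^ (s - 1) * Complex.exp (-z * u))
      (volume.restrict (Set.Ioi 0)) := by
  have : Measurable (fun u : ℝ => (u : ℂ) ^ (s - 1) * Complex.exp (-z * u)) := by fun_prop
  exact this.aestronglyMeasurable

lemma integrableOn_cpow_mul_exp {s z : ℂ} (hs : 0 < s.re) (hz : 0 < z.re) :
    IntegrableOn (fun u : ℝ => (u : ℂ) ^ (s - 1) * Complex.exp (-z * u)) (Set.Ioi 0) := by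
  refine (integrableOn_rpow_mul_exp hs hz).mono' (aestronglyMeasurable_cpow_mul_exp s z) ?_
  filter_upwards [ae_restrict_mem measurableSet_Ioi] with u hu
  exact (norm_cpow_mul_exp s z hu).le

/-- The Laplace transform of `u ^ (s - 1)` may be differentiated under the integral sign. -/
lemma differentiableAt_laplace_cpow {s z : ℂ} (hs : 0 < s.re) (hz : 0 < z.re) :
    DifferentiableAt ℂ
      (fun z : ℂ => ∫ u in Set.Ioi (0 : ℝ), (u : ℂ) ^ (s - 1) * Complex.exp (-z * u)) z := by
  have h2 : 0 < z.re / 2 := by linarith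
  refine (hasDerivAt_integral_of_dominated_loc_of_deriv_le
    (s := Metric.ball z (z.re / 2)) (Metric.ball_mem_nhds z h2)
    (F' := fun z u => (u : ℂ) ^ (s - 1) * (Complex.exp (-z * u) * (-u)))
    (bound := fun u : ℝ => u ^ ((s.re + 1) - 1) * Real.exp (-(z.re / 2) * u))
    (.of_forall fun z => aestronglyMeasurable_cpow_mul_exp s z)
    (integrableOn_cpow_mul_exp hs hz) ?_ ?_
    (integrableOn_rpow_mul_exp (by linarith) h2) ?_).2.differentiableAt
  · have : Measurable
        (fun u : ℝ => (u : ℂ) ^ (s - 1) * (Complex.exp (-z * u) * (-u))) := by fun_prop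
    exact this.aestronglyMeasurable
  · filter_upwards [ae_restrict_mem measurableSet_Ioi] with u hu y hy
    have hu : 0 < u := hu
    have hy' : z.re / 2 ≤ y.re := by
      have h1 := (Complex.abs_re_le_norm (y - z)).trans_lt (mem_ball_iff_norm.1 hy)
      rw [Complex.sub_re] at h1
      linarith [(abs_lt.1 h1).1]
    rw [← mul_assoc, norm_mul, norm_cpow_mul_exp s y hu, norm_neg, Complex.norm_real,
      Real.norm_of_nonneg hu.le, add_sub_right_comm, Real.rpow_add_one hu.ne', mul_right_comm]
    gcongr
  · filter_upwards [] with u y hy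
    refine HasDerivAt.const_mul _ (HasDerivAt.cexp ?_)
    simpa using ((hasDerivAt_id y).neg.mul_const (u : ℂ))

/-- The Gamma integral `∫ u ^ (s - 1) e ^ (-z u) du = Γ(s) z ^ (-s)`, extended from `z > 0` to the
right half-plane by the identity theorem. -/
lemma laplace_cpow {s z : ℂ} (hs : 0 < s.re) (hz : 0 < z.re) :
    ∫ u in Set.Ioi (0 : ℝ), (u : ℂ) ^ (s - 1) * Complex.exp (-z * u)
      = Complex.Gamma s * z ^ (-s) := by
  have hopen : IsOpen {z : ℂ | 0 < z.re} := isOpen_lt continuous_const Complex.continuous_re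
  have hf : AnalyticOnNhd ℂ (fun z : ℂ =>
      ∫ u in Set.Ioi (0 : ℝ), (u : ℂ) ^ (s - 1) * Complex.exp (-z * u)) {z : ℂ | 0 < z.re} :=
    DifferentiableOn.analyticOnNhd
      (fun z hz => (differentiableAt_laplace_cpow hs hz).differentiableWithinAt) hopen
  have hg : AnalyticOnNhd ℂ (fun z : ℂ => Complex.Gamma s * z ^ (-s)) {z : ℂ | 0 < z.re} := by
    refine DifferentiableOn.analyticOnNhd (fun z hz => ?_) hopen
    refine (DifferentiableAt.const_mul ?_ _).differentiableWithinAt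
    exact differentiableAt_id.cpow_const (Or.inl hz)
  refine hf.eqOn_of_preconnected_of_frequently_eq hg (convex_halfSpace_re_gt 0).isPreconnected
    (z₀ := 1) (by simp) ?_ hz
  have ht : Filter.Tendsto (fun x : ℝ => (x : ℂ)) (nhdsWithin 1 (Set.Ioi 1))
      (nhdsWithin 1 {1}ᶜ) := by
    refine tendsto_nhdsWithin_iff.2 ⟨?_, ?_⟩
    · exact (Complex.continuous_ofReal.tendsto' 1 1 (by simp)).mono_left nhdsWithin_le_nhds
    · filter_upwards [self_mem_nhdsWithin] with x hx
      have : x ≠ 1 := ne_of_gt hx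
      simpa using this
  refine ht.frequently (Filter.Eventually.frequently ?_)
  filter_upwards [self_mem_nhdsWithin] with x hx
  have hx0 : 0 < x := one_pos.trans hx
  have := Complex.integral_cpow_mul_exp_neg_mul_Ioi hs hx0
  simp only [neg_mul]
  rw [this, mul_comm, one_div, Complex.inv_cpow, Complex.cpow_neg]
  rw [Complex.arg_ofReal_of_nonneg hx0.le]
  exact Real.pi_pos.ne

/-- A finite product of absolutely convergent series is the sum over multi-indices of the products
of the terms. -/
lemma hasSum_prod_pi {N : ℕ} {f : Fin N → ℕ → ℂ} {c : Fin N → ℂ}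
    (hf : ∀ j, HasSum (f j) (c j)) (hn : ∀ j, Summable fun n => ‖f j n‖) :
    HasSum (fun n : Fin N → ℕ => ∏ j, f j (n j)) (∏ j, c j) ∧
      Summable fun n : Fin N → ℕ => ‖∏ j, f j (n j)‖ := by
  induction N with
  | zero =>
    constructor
    · simp
    · exact Summable.of_finite
  | succ N ih =>
    obtain ⟨h1, h2⟩ := ih (fun j => hf j.succ) (fun j => hn j.succ)
    have h0 : Summable fun x : ℕ × (Fin N → ℕ) => f 0 x.1 * ∏ j, f j.succ (x.2 j) := by
      apply summable_mul_of_summable_norm (hn 0) h2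
    have h3 : HasSum (fun x : ℕ × (Fin N → ℕ) => f 0 x.1 * ∏ j, f j.succ (x.2 j))
        (c 0 * ∏ j : Fin N, c j.succ) := by
      apply HasSum.mul (hf 0) h1 h0
    have h4 : Summable fun x : ℕ × (Fin N → ℕ) => ‖f 0 x.1 * ∏ j, f j.succ (x.2 j)‖ := by
      apply Summable.mul_norm (hn 0) h2
    constructor
    · rw [← (Fin.consEquiv fun _ => ℕ).hasSum_iff]
      simpa [Function.comp_def, Fin.prod_univ_succ, Fin.consEquiv] using h3
    · rw [← (Fin.consEquiv fun _ => ℕ).summable_iff]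
      simpa [Function.comp_def, Fin.prod_univ_succ, Fin.consEquiv] using h4

/-- Multivariate geometric series. -/
lemma hasSum_geom_pi {N : ℕ} {x : Fin N → ℂ} (hx : ∀ j, ‖x j‖ < 1) :
    HasSum (fun n : Fin N → ℕ => ∏ j, x j ^ n j) (∏ j, (1 - x j)⁻¹) :=
  (hasSum_prod_pi (fun j => hasSum_geometric_of_norm_lt_one (hx j))
    (fun j => by simpa using summable_geometric_of_lt_one (norm_nonneg _) (hx j))).1

/-- Real form of `hasSum_geom_pi`. -/
lemma hasSum_geom_pi_real {N : ℕ} {x : Fin N → ℝ} (h0 : ∀ j, 0 ≤ x j) (hx : ∀ j, x j < 1) :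
    HasSum (fun n : Fin N → ℕ => ∏ j, x j ^ n j) (∏ j, (1 - x j)⁻¹) := by
  have := hasSum_geom_pi (x := fun j => (x j : ℂ))
    (fun j => by simpa [abs_of_nonneg (h0 j)] using hx j)
  exact_mod_cast this

/-- Near `0` the factor `(1 - e ^ (-α u))⁻¹` has a simple pole, and it is bounded at infinity, so
that it is at most a constant times `e ^ (c u) / u` for every `c > 0`. -/
lemma inv_one_sub_exp_le {α c u : ℝ} (hα : 0 < α) (hc : 0 < c) (hu : 0 < u) :
    (1 - Real.exp (-α * u))⁻¹ ≤ (min α c)⁻¹ * (u⁻¹ * Real.exp (c * u)) := by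
  set δ := min α c
  have hδ : 0 < δ := lt_min hα hc
  have h1 : δ * u * Real.exp (-(c * u)) ≤ 1 - Real.exp (-α * u) := by
    calc δ * u * Real.exp (-(c * u)) ≤ δ * u * Real.exp (-(δ * u)) := by
          gcongr
          exact min_le_right _ _
      _ ≤ 1 - Real.exp (-(δ * u)) := by
          have := mul_le_mul_of_nonneg_right (Real.add_one_le_exp (δ * u))
            (Real.exp_pos (-(δ * u))).le
          rw [← Real.exp_add, add_neg_cancel, Real.exp_zero] at this
          linarith
      _ ≤ 1 - Real.exp (-α * u) := by
          rw [neg_mul]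
          gcongr
          exact min_le_left _ _
  have h2 : (min α c)⁻¹ * (u⁻¹ * Real.exp (c * u)) = (δ * u * Real.exp (-(c * u)))⁻¹ := by
    rw [mul_inv, mul_inv, ← Real.exp_neg, neg_neg, mul_assoc]
  rw [h2]
  exact inv_anti₀ (by positivity) h1

/-- The dominating function is integrable: its singularity at `0` has order `N + 1 - σ < 1`. -/
lemma integrableOn_bound {N : ℕ} (hN : 1 ≤ N) {σ ω : ℝ} {α : Fin N → ℝ} (hσ : (N : ℝ) < σ)
    (hω : 0 < ω) (hα : ∀ j, 0 < α j) :
    IntegrableOn (fun u : ℝ => u ^ (σ - 1) * Real.exp (-ω * u) *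
      ∏ j, (1 - Real.exp (-α j * u))⁻¹) (Set.Ioi 0) := by
  have hN0 : (0 : ℝ) < N := by exact_mod_cast hN
  -- The total exponential loss of the `N` factors is `e ^ (N c u) = e ^ (ω u / 2)`.
  set c : ℝ := ω / (2 * N) with hc_def
  have hc : 0 < c := by positivity
  have hNc : N * c = ω / 2 := by rw [hc_def]; field_simp
  have hint : IntegrableOn (fun u : ℝ => (∏ j, (min (α j) c)⁻¹) *
      (u ^ ((σ - N) - 1) * Real.exp (-(ω / 2) * u))) (Set.Ioi 0) :=
    (integrableOn_rpow_mul_exp (by linarith) (by linarith)).const_mul _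
  refine hint.mono' ?_ ?_
  · have : Measurable (fun u : ℝ => u ^ (σ - 1) * Real.exp (-ω * u) *
      ∏ j, (1 - Real.exp (-α j * u))⁻¹) := by fun_prop
    exact this.aestronglyMeasurable
  · filter_upwards [ae_restrict_mem measurableSet_Ioi] with u hu
    have hu : 0 < u := hu
    have hpos : ∀ j, 0 ≤ (1 - Real.exp (-α j * u))⁻¹ := fun j => by
      rw [inv_nonneg, sub_nonneg, Real.exp_le_one_iff]
      nlinarith [mul_pos (hα j) hu]
    have hprod : ∏ j, (1 - Real.exp (-α j * u))⁻¹ ≤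
        (∏ j, (min (α j) c)⁻¹) * (u⁻¹ * Real.exp (c * u)) ^ N := by
      refine (Finset.prod_le_prod (fun j _ => hpos j)
        (fun j _ => inv_one_sub_exp_le (hα j) hc hu)).trans_eq ?_
      rw [Finset.prod_mul_distrib, Finset.prod_const, Finset.card_univ, Fintype.card_fin]
    rw [Real.norm_of_nonneg (mul_nonneg (by positivity) (Finset.prod_nonneg fun j _ => hpos j))]
    refine (mul_le_mul_of_nonneg_left hprod (by positivity)).trans_eq ?_
    have e1 : u ^ (σ - N - 1) = u ^ (σ - 1) * (u⁻¹) ^ N := by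
      rw [show σ - N - 1 = (σ - 1) - N by ring, Real.rpow_sub hu, Real.rpow_natCast, inv_pow,
        div_eq_mul_inv]
    have e2 : Real.exp (-(ω / 2) * u) = Real.exp (-ω * u) * Real.exp (c * u) ^ N := by
      rw [← Real.exp_nat_mul, ← Real.exp_add]
      congr 1
      rw [← mul_assoc, hNc]
      ring
    rw [e1, e2, mul_pow]
    ring

/-- Both representations at once: `ε` is `1` for the Barnes zeta function and `-1` for its
alternating version. -/
lemma hasSum_barnes {N : ℕ} (hN : 1 ≤ N) {s w : ℂ} {a : Fin N → ℂ}
    (hs : (N : ℝ) < s.re) (hw : 0 < w.re) (ha : ∀ j, 0 < (a j).re) {ε : ℂ} (hε : ‖ε‖ = 1) :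
    HasSum (fun n : Fin N → ℕ =>
        ε ^ (∑ j, n j) * (w + ∑ j, (n j : ℂ) * a j) ^ (-s))
      ((1 / Complex.Gamma s) *
        ∫ u in Set.Ioi (0 : ℝ), (u : ℂ) ^ (s - 1) * Complex.exp (-w * u) *
          ∏ j, (1 - ε * Complex.exp (-a j * u))⁻¹) := by
  have hs0 : 0 < s.re := (Nat.cast_nonneg N).trans_lt hs
  have hΓ : Complex.Gamma s ≠ 0 := Complex.Gamma_ne_zero_of_re_pos hs0
  have hlt : ∀ u : ℝ, 0 < u → ∀ j, Real.exp (-(a j).re * u) < 1 := fun u hu j => by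
    rw [Real.exp_lt_one_iff]
    nlinarith [mul_pos (ha j) hu]
  have hnorm : ∀ (u : ℝ) j, ‖ε * Complex.exp (-a j * u)‖ = Real.exp (-(a j).re * u) := by
    intro u j
    rw [norm_mul, hε, one_mul, Complex.norm_exp]
    simp
  have hbs : ∀ u : ℝ, 0 < u → HasSum (fun n : Fin N → ℕ =>
      u ^ (s.re - 1) * Real.exp (-w.re * u) * ∏ j, Real.exp (-(a j).re * u) ^ n j)
      (u ^ (s.re - 1) * Real.exp (-w.re * u) * ∏ j, (1 - Real.exp (-(a j).re * u))⁻¹) :=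
    fun u hu => (hasSum_geom_pi_real (fun j => (Real.exp_pos _).le) (hlt u hu)).mul_left _
  have key := hasSum_integral_of_dominated_convergence (μ := volume.restrict (Set.Ioi (0 : ℝ)))
    (F := fun (n : Fin N → ℕ) (u : ℝ) => (u : ℂ) ^ (s - 1) * Complex.exp (-w * u) *
      ∏ j, (ε * Complex.exp (-a j * u)) ^ n j)
    (f := fun u : ℝ => (u : ℂ) ^ (s - 1) * Complex.exp (-w * u) *
          ∏ j, (1 - ε * Complex.exp (-a j * u))⁻¹)
    (fun (n : Fin N → ℕ) (u : ℝ) => u ^ (s.re - 1) * Real.exp (-w.re * u) *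
      ∏ j, Real.exp (-(a j).re * u) ^ n j)
    (fun n => by
      refine (aestronglyMeasurable_cpow_mul_exp s w).mul ?_
      exact Continuous.aestronglyMeasurable (by fun_prop))
    (fun n => by
      filter_upwards [ae_restrict_mem measurableSet_Ioi] with u hu
      rw [norm_mul, norm_cpow_mul_exp s w hu, norm_prod]
      simp_rw [norm_pow, hnorm]
      exact le_rfl)
    (by
      filter_upwards [ae_restrict_mem measurableSet_Ioi] with u hu
      exact (hbs u hu).summable)
    (by
      refine (integrableOn_bound hN hs hw ha).congr ?_
      filter_upwards [ae_restrict_mem measurableSet_Ioi] with u hu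
      exact (hbs u hu).tsum_eq.symm)
    (by
      filter_upwards [ae_restrict_mem measurableSet_Ioi] with u hu
      exact (hasSum_geom_pi fun j => (hnorm u j).trans_lt (hlt u hu j)).mul_left _)
  refine (key.mul_left (1 / Complex.Gamma s)).congr_fun fun n => ?_
  have hz : 0 < (w + ∑ j, (n j : ℂ) * a j).re := by
    rw [Complex.add_re, Complex.re_sum]
    refine add_pos_of_pos_of_nonneg hw (Finset.sum_nonneg fun j _ => ?_)
    simpa using mul_nonneg (Nat.cast_nonneg (n j)) (ha j).le
  have hterm : ∀ u : ℝ, (u : ℂ) ^ (s - 1) * Complex.exp (-w * u) *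
      ∏ j, (ε * Complex.exp (-a j * u)) ^ n j = ε ^ (∑ j, n j) *
        ((u : ℂ) ^ (s - 1) * Complex.exp (-(w + ∑ j, (n j : ℂ) * a j) * u)) := by
    intro u
    have : Complex.exp (-(w + ∑ j, (n j : ℂ) * a j) * u) =
        Complex.exp (-w * u) * ∏ j, Complex.exp (-a j * u) ^ n j := by
      simp_rw [← Complex.exp_nat_mul]
      rw [← Complex.exp_sum, ← Complex.exp_add, neg_add, add_mul, neg_mul (∑ j, _), Finset.sum_mul,
        ← Finset.sum_neg_distrib]
      congr 2
      refine Finset.sum_congr rfl fun j _ => ?_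
      ring
    simp_rw [this, mul_pow]
    rw [Finset.prod_mul_distrib, Finset.prod_pow_eq_pow_sum]
    ring
  simp_rw [hterm]
  rw [integral_const_mul, laplace_cpow hs0 hz]
  field_simp

theorem barnesZeta_integral_rep (N : ℕ) (hN : 1 ≤ N) (s w : ℂ) (a : Fin N → ℂ)
    (hs : (N : ℝ) < s.re) (hw : 0 < w.re) (ha : ∀ j, 0 < (a j).re) :
    (barnesZeta N s w a =
      (1 / Complex.Gamma s) *
        ∫ u in Set.Ioi (0 : ℝ), (u : ℂ) ^ (s - 1) * Complex.exp (-w * u) *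
          ∏ j, (1 - Complex.exp (-a j * u))⁻¹) ∧
    (barnesZetaAlt N s w a =
      (1 / Complex.Gamma s) *
        ∫ u in Set.Ioi (0 : ℝ), (u : ℂ) ^ (s - 1) * Complex.exp (-w * u) *
          ∏ j, (1 + Complex.exp (-a j * u))⁻¹) := by
  constructor
  · have := (hasSum_barnes hN hs hw ha (ε := 1) (by simp)).tsum_eq
    simp only [one_pow, one_mul] at this
    exact this
  · have := (hasSum_barnes hN hs hw ha (ε := -1) (by simp)).tsum_eq
    simp only [neg_one_mul, sub_neg_eq_add] at this
    exact this
end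

section
/- Let s, a, b ∈ ℂ with Re(s) > 2, Re(a) > 0, and −Re(a) < Im(b) < Re(a). Then (1/(2Γ(s))) ∫₀^∞ x^{s−1}/(cosh(ax) − cos(bx)) dx = ζ₂(s, a | a − bi, a + bi) and (1/(2Γ(s))) ∫₀^∞ x^{s−1}/(cosh(ax) + cos(bx)) dx = ζ̃₂(s, a | a − bi, a + bi). In particular, (1/(2Γ(s))) ∫₀^∞ x^{s−1}/(cosh x − cos x) dx = ζ₂(s, 1 | 1 − i, 1 + i). -/
/-!
Since `2 (cosh (a x) ∓ cos (b x)) = e^{a x} (1 ∓ e^{-(a - b i) x}) (1 ∓ e^{-(a + b i) x})`, and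
`a ± b i` have positive real part by the bounds on `Im b`, two geometric series expand the integrand
on `x > 0` as `2 x^{s-1} ∑ (±1)^{n+m} e^{-(a + n (a - b i) + m (a + b i)) x}`. Each term integrates
to `Γ(s) (a + n (a - b i) + m (a + b i))^{-s}` by Euler's integral with complex rate
(`integral_cpow_mul_cexp_neg_mul`), which comes from the case of a real rate by analytic
continuation to the right half-plane. Sum and integral may be interchanged because the integrals of
the norms of the terms are `Γ(Re s) (Re a + n Re(a - b i) + m Re(a + b i))^{-Re s}`, and this double
series converges for `Re s > 2` (`summable_linear_rpow`). The third identity is `a = b = 1`.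
-/


open MeasureTheory

/-- The Barnes zeta function `ζ₂(s, w | a₁, a₂)`. -/
noncomputable def barnesZeta2 (s w a₁ a₂ : ℂ) : ℂ :=
  ∑' nm : ℕ × ℕ, (w + (nm.1 : ℂ) * a₁ + (nm.2 : ℂ) * a₂) ^ (-s)

/-- The alternating Barnes zeta function `ζ̃₂(s, w | a₁, a₂)`. -/
noncomputable def barnesZeta2Alt (s w a₁ a₂ : ℂ) : ℂ :=
  ∑' nm : ℕ × ℕ, (-1 : ℂ) ^ (nm.1 + nm.2) * (w + (nm.1 : ℂ) * a₁ + (nm.2 : ℂ) * a₂) ^ (-s)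

open Complex Set

lemma norm_cpow_mul_cexp {s r : ℂ} {t : ℝ} (ht : 0 < t) :
    ‖(t : ℂ) ^ (s - 1) * cexp (-(r * t))‖ = t ^ (s.re - 1) * Real.exp (-(r.re * t)) := by
  rw [norm_mul, norm_cpow_eq_rpow_re_of_pos ht, norm_exp]
  simp

lemma integrableOn_rpow_mul_exp_s1 {σ r : ℝ} (hσ : 0 < σ) (hr : 0 < r) :
    IntegrableOn (fun t : ℝ ↦ t ^ (σ - 1) * Real.exp (-(r * t))) (Ioi 0) := by
  have := integrableOn_rpow_mul_exp_neg_mul_rpow (p := 1) (s := σ - 1) (b := r) (by linarith)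
    one_pos hr
  simpa using this

lemma aestronglyMeasurable_cpow_mul_cexp (s r : ℂ) :
    AEStronglyMeasurable (fun t : ℝ ↦ (t : ℂ) ^ (s - 1) * cexp (-(r * t)))
      (volume.restrict (Ioi 0)) := by
  refine ContinuousOn.aestronglyMeasurable (fun t ht ↦ ContinuousAt.continuousWithinAt ?_)
    measurableSet_Ioi
  refine ContinuousAt.mul (continuousAt_ofReal_cpow_const _ _ (Or.inr (ne_of_gt ht))) ?_
  fun_prop

lemma integrableOn_cpow_mul_cexp {s r : ℂ} (hs : 0 < s.re) (hr : 0 < r.re) :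
    IntegrableOn (fun t : ℝ ↦ (t : ℂ) ^ (s - 1) * cexp (-(r * t))) (Ioi 0) := by
  refine (integrableOn_rpow_mul_exp_s1 hs hr).mono' (aestronglyMeasurable_cpow_mul_cexp s r) ?_
  filter_upwards [ae_restrict_mem measurableSet_Ioi] with t ht
  exact (norm_cpow_mul_cexp ht).le

lemma differentiableAt_integral_cpow_mul_cexp {s r : ℂ} (hs : 0 < s.re) (hr : 0 < r.re) :
    DifferentiableAt ℂ (fun r : ℂ ↦ ∫ t : ℝ in Ioi 0, (t : ℂ) ^ (s - 1) * cexp (-(r * t))) r := by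
  -- On the ball of radius `Re r / 2` around `r` the rate keeps real part at least `Re r / 2`.
  have key := hasDerivAt_integral_of_dominated_loc_of_deriv_le (μ := volume.restrict (Ioi (0 : ℝ)))
    (F := fun (r : ℂ) (t : ℝ) ↦ (t : ℂ) ^ (s - 1) * cexp (-(r * t)))
    (F' := fun (r : ℂ) (t : ℝ) ↦ (t : ℂ) ^ (s - 1) * (cexp (-(r * t)) * -(t : ℂ)))
    (x₀ := r) (s := Metric.ball r (r.re / 2))
    (bound := fun t ↦ t ^ ((s.re + 1) - 1) * Real.exp (-(r.re / 2 * t)))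
    (Metric.ball_mem_nhds r (by linarith))
    (Filter.Eventually.of_forall fun r ↦ aestronglyMeasurable_cpow_mul_cexp s r)
    (integrableOn_cpow_mul_cexp hs hr) ?_ ?_
    (integrableOn_rpow_mul_exp_s1 (by linarith) (by linarith)) ?_
  · exact key.2.differentiableAt
  · have : AEStronglyMeasurable (fun t : ℝ ↦ -(t : ℂ)) (volume.restrict (Ioi 0)) := by fun_prop
    simpa only [mul_assoc] using (aestronglyMeasurable_cpow_mul_cexp s r).fun_mul this
  · filter_upwards [ae_restrict_mem measurableSet_Ioi] with t ht z hz
    have ht' : 0 < t := ht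
    have hz' : r.re / 2 ≤ z.re := by
      have h1 := (abs_re_le_norm (z - r)).trans_lt (by simpa [dist_eq_norm] using hz)
      rw [sub_re, abs_lt] at h1
      linarith
    rw [← mul_assoc, norm_mul, norm_cpow_mul_cexp ht', norm_neg, norm_real,
      Real.norm_of_nonneg ht'.le, add_sub_cancel_right, mul_right_comm]
    have : t ^ (s.re - 1) * t = t ^ s.re := by
      rw [← Real.rpow_add_one ht'.ne', sub_add_cancel]
    rw [this]
    gcongr
  · filter_upwards with t z _
    refine HasDerivAt.const_mul _ (HasDerivAt.cexp ?_)
    simpa using ((hasDerivAt_id' z).mul_const (t : ℂ)).fun_neg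

/-- Euler's integral for a complex rate `r` in the right half-plane, continued analytically from
positive real rates. -/
lemma integral_cpow_mul_cexp_neg_mul {s r : ℂ} (hs : 0 < s.re) (hr : 0 < r.re) :
    ∫ t : ℝ in Ioi 0, (t : ℂ) ^ (s - 1) * cexp (-(r * t)) = Gamma s * r ^ (-s) := by
  have hopen : IsOpen {z : ℂ | 0 < z.re} := isOpen_lt continuous_const continuous_re
  have h1 : AnalyticOnNhd ℂ
      (fun r : ℂ ↦ ∫ t : ℝ in Ioi 0, (t : ℂ) ^ (s - 1) * cexp (-(r * t))) {z : ℂ | 0 < z.re} :=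
    DifferentiableOn.analyticOnNhd
      (fun z hz ↦ (differentiableAt_integral_cpow_mul_cexp hs hz).differentiableWithinAt) hopen
  have h2 : AnalyticOnNhd ℂ (fun r : ℂ ↦ Gamma s * r ^ (-s)) {z : ℂ | 0 < z.re} :=
    DifferentiableOn.analyticOnNhd
      (fun z hz ↦ ((differentiableAt_id.cpow_const (Or.inl hz)).const_mul
        (Gamma s)).differentiableWithinAt) hopen
  refine h1.eqOn_of_preconnected_of_frequently_eq h2
    (convex_halfSpace_re_gt 0).isPreconnected (z₀ := 1) (by simp) ?_ hr
  -- The sequence `1 + 1 / (n + 1)` of real rates accumulates at `1`.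
  have hlim : Filter.Tendsto (fun n : ℕ ↦ ((1 + 1 / ((n : ℝ) + 1) : ℝ) : ℂ)) Filter.atTop
      (nhdsWithin 1 {1}ᶜ) := by
    refine tendsto_nhdsWithin_iff.mpr ⟨?_, Filter.Eventually.of_forall fun n ↦ ?_⟩
    · have := (tendsto_one_div_add_atTop_nhds_zero_nat (𝕜 := ℝ)).const_add 1
      rw [add_zero] at this
      exact (continuous_ofReal.tendsto' 1 1 (by simp)).comp this
    · have : (0 : ℝ) < 1 / ((n : ℝ) + 1) := by positivity
      rw [mem_compl_iff, mem_singleton_iff, ← ofReal_one, ofReal_inj]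
      linarith
  refine hlim.frequently (Filter.Frequently.of_forall fun n ↦ ?_)
  have hpos : (0 : ℝ) < 1 + 1 / ((n : ℝ) + 1) := by positivity
  rw [integral_cpow_mul_exp_neg_mul_Ioi hs hpos, mul_comm, cpow_neg, one_div,
    inv_cpow _ _ (arg_ofReal_of_nonneg hpos.le ▸ Real.pi_pos.ne)]

/-- Comparison with a product of two `p`-series of exponent `σ / 2`, through
`(n + 1) (m + 1) ≤ (n + m + 1) ^ 2`. -/
lemma summable_linear_rpow {σ w α β : ℝ} (hσ : 2 < σ) (hw : 0 < w) (hα : 0 < α) (hβ : 0 < β) :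
    Summable fun nm : ℕ × ℕ ↦ (w + nm.1 * α + nm.2 * β) ^ (-σ) := by
  obtain ⟨c, hc, hcw, hcα, hcβ⟩ : ∃ c : ℝ, 0 < c ∧ c ≤ w ∧ c ≤ α ∧ c ≤ β :=
    ⟨min w (min α β), by positivity, by simp, by simp, by simp⟩
  have h1 : Summable fun n : ℕ ↦ ((n : ℝ) + 1) ^ (-(σ / 2)) := by
    have := (summable_nat_add_iff 1).mpr (Real.summable_nat_rpow (p := -(σ / 2)) |>.mpr
      (by linarith))
    simpa using this
  have h2 := (h1.mul_of_nonneg h1 (fun n ↦ by positivity) (fun n ↦ by positivity)).mul_left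
    (c ^ (-σ))
  refine Summable.of_nonneg_of_le (fun nm ↦ by positivity) (fun nm ↦ ?_) h2
  obtain ⟨n, m⟩ := nm
  have hn : (0 : ℝ) ≤ n := n.cast_nonneg
  have hm : (0 : ℝ) ≤ m := m.cast_nonneg
  have hle : c * ((n : ℝ) + m + 1) ≤ w + n * α + m * β := by
    nlinarith [mul_le_mul_of_nonneg_left hcα hn, mul_le_mul_of_nonneg_left hcβ hm]
  calc (w + n * α + m * β) ^ (-σ) ≤ (c * ((n : ℝ) + m + 1)) ^ (-σ) :=
        Real.rpow_le_rpow_of_nonpos (by positivity) hle (by linarith)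
    _ = c ^ (-σ) * (((n : ℝ) + m + 1) ^ 2) ^ (-(σ / 2)) := by
        rw [Real.mul_rpow hc.le (by positivity), ← Real.rpow_natCast, ← Real.rpow_mul (by positivity)]
        congr 2
        push_cast
        ring
    _ ≤ c ^ (-σ) * (((n : ℝ) + 1) * (m + 1)) ^ (-(σ / 2)) := by
        refine mul_le_mul_of_nonneg_left ?_ (by positivity)
        refine Real.rpow_le_rpow_of_nonpos (by positivity) ?_ (by linarith)
        nlinarith [mul_nonneg hn hm]
    _ = _ := by rw [Real.mul_rpow (by positivity) (by positivity)]

lemma norm_mul_cexp_lt_one {ε α : ℂ} {x : ℝ} (hε : ‖ε‖ = 1) (hα : 0 < α.re) (hx : 0 < x) :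
    ‖ε * cexp (-(α * x))‖ < 1 := by
  rw [norm_mul, hε, one_mul, norm_exp, Real.exp_lt_one_iff]
  simpa using mul_pos hα hx

lemma tsum_pow_mul_cexp {ε w α β : ℂ} {x : ℝ} (hε : ‖ε‖ = 1) (hα : 0 < α.re) (hβ : 0 < β.re)
    (hx : 0 < x) :
    ∑' nm : ℕ × ℕ, ε ^ (nm.1 + nm.2) * cexp (-((w + nm.1 * α + nm.2 * β) * x)) =
      cexp (-(w * x)) * ((1 - ε * cexp (-(α * x)))⁻¹ * (1 - ε * cexp (-(β * x)))⁻¹) := by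
  have hp := norm_mul_cexp_lt_one hε hα hx
  have hq := norm_mul_cexp_lt_one hε hβ hx
  rw [← tsum_geometric_of_norm_lt_one hp, ← tsum_geometric_of_norm_lt_one hq,
    tsum_mul_tsum_of_summable_norm (summable_norm_geometric_of_norm_lt_one hp)
      (summable_norm_geometric_of_norm_lt_one hq), ← tsum_mul_left]
  refine tsum_congr fun nm ↦ ?_
  have : cexp (-((w + nm.1 * α + nm.2 * β) * x)) =
      cexp (-(w * x)) * (cexp (-(α * x)) ^ nm.1 * cexp (-(β * x)) ^ nm.2) := by
    rw [← exp_nat_mul, ← exp_nat_mul, ← exp_add, ← exp_add]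
    congr 1
    ring
  rw [this, pow_add, mul_pow, mul_pow]
  ring

/-- Mellin transform of a product of two geometric series, covering the plain (`ε = 1`) and the
alternating (`ε = -1`) Barnes zeta function at once. -/
lemma integral_geometric_eq_tsum {ε s w α β : ℂ} (hε : ‖ε‖ = 1) (hs : 2 < s.re) (hw : 0 < w.re)
    (hα : 0 < α.re) (hβ : 0 < β.re) :
    ∫ x : ℝ in Ioi 0, (x : ℂ) ^ (s - 1) *
        (cexp (-(w * x)) * ((1 - ε * cexp (-(α * x)))⁻¹ * (1 - ε * cexp (-(β * x)))⁻¹)) =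
      Gamma s * ∑' nm : ℕ × ℕ, ε ^ (nm.1 + nm.2) * (w + nm.1 * α + nm.2 * β) ^ (-s) := by
  have hs0 : 0 < s.re := by linarith
  have hre (nm : ℕ × ℕ) :
      (w + nm.1 * α + nm.2 * β).re = w.re + nm.1 * α.re + nm.2 * β.re := by simp
  have hpos (nm : ℕ × ℕ) : 0 < (w + nm.1 * α + nm.2 * β).re := by rw [hre]; positivity
  have hint := integral_tsum_of_summable_integral_norm (μ := volume.restrict (Ioi (0 : ℝ)))
    (F := fun (nm : ℕ × ℕ) (x : ℝ) ↦ ε ^ (nm.1 + nm.2) *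
      ((x : ℂ) ^ (s - 1) * cexp (-((w + nm.1 * α + nm.2 * β) * x))))
    (fun nm ↦ (integrableOn_cpow_mul_cexp hs0 (hpos nm)).const_mul _) ?_
  · rw [← tsum_mul_left]
    calc _ = ∫ x : ℝ in Ioi 0, ∑' nm : ℕ × ℕ, ε ^ (nm.1 + nm.2) *
          ((x : ℂ) ^ (s - 1) * cexp (-((w + nm.1 * α + nm.2 * β) * x))) := by
          refine setIntegral_congr_fun measurableSet_Ioi fun x hx ↦ ?_
          simp only [← tsum_pow_mul_cexp (w := w) hε hα hβ hx, ← tsum_mul_left]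
          exact tsum_congr fun nm ↦ by ring
      _ = _ := by
          rw [← hint]
          refine tsum_congr fun nm ↦ ?_
          rw [integral_const_mul, integral_cpow_mul_cexp_neg_mul hs0 (hpos nm)]
          ring
  · refine ((summable_linear_rpow hs hw hα hβ).mul_left (Real.Gamma s.re)).congr fun nm ↦ ?_
    rw [← hre]
    have h := Real.integral_rpow_mul_exp_neg_mul_Ioi hs0 (hpos nm)
    rw [one_div, Real.inv_rpow (hpos nm).le, ← Real.rpow_neg (hpos nm).le,
      mul_comm _ (Real.Gamma _)] at h
    rw [← h]
    refine setIntegral_congr_fun measurableSet_Ioi fun x hx ↦ ?_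
    rw [norm_mul, norm_pow, hε, one_pow, one_mul, norm_cpow_mul_cexp hx]

/-- Factorisation of the denominator for `ε = ±1`. No factor needs to be nonzero: if one vanishes,
both sides are `0`. -/
lemma one_div_cosh_sub_cos {ε : ℂ} (hε : ε * ε = 1) (a b : ℂ) (x : ℝ) :
    (Complex.cosh (a * x) - ε * Complex.cos (b * x))⁻¹ =
      2 * (cexp (-(a * x)) * ((1 - ε * cexp (-((a - b * I) * x)))⁻¹ *
        (1 - ε * cexp (-((a + b * I) * x)))⁻¹)) := by
  have h : Complex.cosh (a * x) - ε * Complex.cos (b * x) =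
      cexp (a * x) * ((1 - ε * cexp (-((a - b * I) * x))) *
        (1 - ε * cexp (-((a + b * I) * x)))) / 2 := by
    have e1 : cexp (-((a - b * I) * x)) = cexp (-(a * x)) * cexp (b * x * I) := by
      rw [← exp_add]; congr 1; ring
    have e2 : cexp (-((a + b * I) * x)) = cexp (-(a * x)) * cexp (-(b * x) * I) := by
      rw [← exp_add]; congr 1; ring
    have e3 : cexp (a * x) * cexp (-(a * x)) = 1 := by rw [← exp_add]; simp
    have e4 : cexp (b * x * I) * cexp (-(b * x) * I) = 1 := by rw [← exp_add]; simp
    rw [Complex.cosh, Complex.cos, e1, e2]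
    generalize cexp (a * x) = A at *
    generalize cexp (-(a * x)) = A' at *
    generalize cexp (b * x * I) = B at *
    generalize cexp (-(b * x) * I) = B' at *
    linear_combination (-A' / 2 * (A * A' * (B * B'))) * hε
      + (ε * (B + B') / 2 - A' / 2 * (B * B')) * e3 - A' / 2 * e4
  rw [h, exp_neg (a * x)]
  simp only [div_eq_mul_inv, mul_inv, inv_inv]
  ring

lemma barnes_integral {ε s a b : ℂ} (hε : ε * ε = 1) (hs : 2 < s.re) (ha : 0 < a.re)
    (hb₁ : -a.re < b.im) (hb₂ : b.im < a.re) :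
    (1 / (2 * Gamma s)) * ∫ x in Ioi (0 : ℝ),
        (x : ℂ) ^ (s - 1) / (Complex.cosh (a * x) - ε * Complex.cos (b * x)) =
      ∑' nm : ℕ × ℕ, ε ^ (nm.1 + nm.2) *
        (a + nm.1 * (a - b * I) + nm.2 * (a + b * I)) ^ (-s) := by
  have hnorm : ‖ε‖ = 1 := by
    have : ‖ε‖ * ‖ε‖ = 1 := by rw [← norm_mul, hε, norm_one]
    nlinarith [norm_nonneg ε]
  have hΓ : Gamma s ≠ 0 := Gamma_ne_zero_of_re_pos (by linarith)
  have key := integral_geometric_eq_tsum (ε := ε) (s := s) (w := a) (α := a - b * I)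
    (β := a + b * I) hnorm hs ha (by simp; linarith) (by simp; linarith)
  simp only [div_eq_mul_inv _ (Complex.cosh _ - _), one_div_cosh_sub_cos hε, mul_left_comm _ (2 : ℂ)]
  rw [integral_const_mul, key, one_div, ← mul_assoc 2, inv_mul_cancel_left₀ (by simp [hΓ])]

theorem berndt_integral_barnesZeta2 (s a b : ℂ) (hs : 2 < s.re) (ha : 0 < a.re)
    (hb₁ : -a.re < b.im) (hb₂ : b.im < a.re) :
    ((1 / (2 * Complex.Gamma s)) *
        ∫ x in Set.Ioi (0 : ℝ),
          (x : ℂ) ^ (s - 1) / (Complex.cosh (a * x) - Complex.cos (b * x)) =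
      barnesZeta2 s a (a - b * Complex.I) (a + b * Complex.I)) ∧
    ((1 / (2 * Complex.Gamma s)) *
        ∫ x in Set.Ioi (0 : ℝ),
          (x : ℂ) ^ (s - 1) / (Complex.cosh (a * x) + Complex.cos (b * x)) =
      barnesZeta2Alt s a (a - b * Complex.I) (a + b * Complex.I)) ∧
    ((1 / (2 * Complex.Gamma s)) *
        ∫ x in Set.Ioi (0 : ℝ),
          (x : ℂ) ^ (s - 1) / (Complex.cosh x - Complex.cos x) =
      barnesZeta2 s 1 (1 - Complex.I) (1 + Complex.I)) := by
  refine ⟨?_, ?_, ?_⟩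
  · simpa [barnesZeta2] using barnes_integral (ε := 1) (by simp) hs ha hb₁ hb₂
  · simpa [barnesZeta2Alt] using barnes_integral (ε := -1) (by simp) hs ha hb₁ hb₂
  · simpa [barnesZeta2] using
      barnes_integral (ε := 1) (a := 1) (b := 1) (by simp) hs (by simp) (by simp) (by simp)
end

section
/- The limit as N → ∞ of Σ_{(p,q) ∈ {0,…,N}², (p,q) ≠ (0,0)} (−1)^{p+q+1} arctan((p+q+1)/(p(p+1)+q(q+1))) exists and equals π/4. -/
/-!
Since `(p + i(q+1)) * ((p+1) - iq) = p(p+1) + q(q+1) + i(p+q+1)`, the arctangent in the sum is the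
difference `θ(p, q+1) - θ(p+1, q)`, where `θ(m, n)` is the argument of `m + in`
(`arctan_eq_angle_sub`). The sign `(-1)^(p+q+1)` is the same function of `m + n` at both points
`(m, n)`, so the square sum telescopes to its boundary (`sum_square_telescope`). On the axes `θ` is
`π/2` or `0`, and `θ(p, M) = π/2 - θ(M, p)` on the two outer sides, where `M = N + 1`.

Summing the outer sides by parts shows that the partial sum equals
`π/4 + (-1)^M * ∑_{p<M} (-1)^p d_p` with `d_p = arctan((p+1)/M) - arctan(p/M)`. The formula
`d_p = arctan(M / (M² + p(p+1)))` shows that `d` is nonnegative and decreasing in `p`, so the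
alternating sum lies between `0` and `d_0 = arctan(1/M)`, which tends to `0`.
-/

open Real Filter

/-- The argument in `[0, π/2]` of the lattice point `(m, n)` of the first quadrant. The value at the
origin is `π/2`; it cancels wherever it occurs. -/
noncomputable def latticeAngle (m n : ℕ) : ℝ :=
  if m = 0 then π / 2 else arctan ((n : ℝ) / m)

lemma arctan_eq_angle_sub (p q : ℕ) (h : (p, q) ≠ (0, 0)) :
    arctan (((p : ℝ) + q + 1) / ((p : ℝ) * (p + 1) + (q : ℝ) * (q + 1))) =
      latticeAngle p (q + 1) - latticeAngle (p + 1) q := by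
  rcases Nat.eq_zero_or_pos p with rfl | hp
  · have hq : 0 < q := by
      rcases Nat.eq_zero_or_pos q with rfl | hq
      · exact absurd rfl h
      · exact hq
    have hq' : (0 : ℝ) < q := by exact_mod_cast hq
    have e : (((0 : ℕ) : ℝ) + q + 1) / (((0 : ℕ) : ℝ) * ((0 : ℕ) + 1) + (q : ℝ) * (q + 1))
        = (q : ℝ)⁻¹ := by
      push_cast
      field_simp
      ring
    rw [e, arctan_inv_of_pos hq']
    simp [latticeAngle]
  · have hp' : (0 : ℝ) < p := by exact_mod_cast hp
    have hq' : (0 : ℝ) ≤ q := q.cast_nonneg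
    have hxy : ((q : ℝ) + 1) / p * (-(q / (p + 1))) < 1 := by
      have : 0 ≤ ((q : ℝ) + 1) / p * (q / (p + 1)) := by positivity
      linarith
    have key := arctan_add hxy
    rw [arctan_neg] at key
    simp only [latticeAngle, hp.ne', Nat.succ_ne_zero, if_false]
    push_cast
    rw [sub_eq_add_neg, key]
    congr 1
    have h1 : (p : ℝ) * (p + 1) + q * (q + 1) ≠ 0 := by positivity
    have h2 : 1 - ((q : ℝ) + 1) / p * (-(q / (p + 1))) =
        ((p : ℝ) * (p + 1) + q * (q + 1)) / (p * (p + 1)) := by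
      field_simp
      ring
    rw [h2]
    field_simp
    ring

lemma sum_square_telescope (s : ℕ → ℕ → ℝ) (M : ℕ) :
    ∑ p ∈ Finset.range M, ∑ q ∈ Finset.range M, (s p (q + 1) - s (p + 1) q) =
      ∑ n ∈ Finset.range M, (s 0 n - s n 0) + ∑ p ∈ Finset.range M, (s p M - s M p) := by
  have shift (f : ℕ → ℝ) : ∑ q ∈ Finset.range M, f (q + 1) =
      ∑ q ∈ Finset.range M, f q + f M - f 0 := by
    have h1 := Finset.sum_range_succ f M
    have h2 := Finset.sum_range_succ' f M
    linarith
  have h1 : ∑ p ∈ Finset.range M, ∑ q ∈ Finset.range M, s p (q + 1) =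
      ∑ p ∈ Finset.range M, (∑ q ∈ Finset.range M, s p q + s p M - s p 0) :=
    Finset.sum_congr rfl fun p _ => shift (s p)
  have h2 := shift fun p => ∑ q ∈ Finset.range M, s p q
  simp only [Finset.sum_sub_distrib, Finset.sum_add_distrib] at h1 h2 ⊢
  linarith

/-- The alternating partial sums of a nonnegative decreasing sequence lie between `0` and its first
term. -/
lemma alternating_sum_bounds (n : ℕ) : ∀ d : ℕ → ℝ, Antitone d → (∀ k, 0 ≤ d k) →
    0 ≤ ∑ p ∈ Finset.range n, (-1 : ℝ) ^ p * d p ∧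
      ∑ p ∈ Finset.range n, (-1 : ℝ) ^ p * d p ≤ d 0 := by
  induction n with
  | zero => intro d _ hd; simpa using hd 0
  | succ n ih =>
    intro d ha hd
    obtain ⟨h1, h2⟩ := ih (fun k => d (k + 1)) (fun a b hab => ha (by omega)) (fun k => hd _)
    have e : ∑ p ∈ Finset.range (n + 1), (-1 : ℝ) ^ p * d p =
        d 0 - ∑ p ∈ Finset.range n, (-1 : ℝ) ^ p * d (p + 1) := by
      rw [Finset.sum_range_succ', sub_eq_add_neg, ← Finset.sum_neg_distrib]
      simp only [pow_succ]
      ring_nf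
    have h3 := ha (Nat.zero_le 1)
    simp only [zero_add] at h2
    rw [e]
    constructor <;> linarith

/-- The increment of the angle along the side `x = M` of the square, from `(M, p)` to
`(M, p + 1)`. -/
noncomputable def angleStep (M p : ℕ) : ℝ := arctan (((p : ℝ) + 1) / M) - arctan ((p : ℝ) / M)

lemma angleStep_eq {M : ℕ} (hM : 0 < M) (p : ℕ) :
    angleStep M p = arctan ((M : ℝ) / ((M : ℝ) ^ 2 + p * (p + 1))) := by
  have hM' : (0 : ℝ) < M := by exact_mod_cast hM
  have hp : (0 : ℝ) ≤ p := p.cast_nonneg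
  have hxy : ((p : ℝ) + 1) / M * (-(p / M)) < 1 := by
    have : 0 ≤ ((p : ℝ) + 1) / M * (p / M) := by positivity
    linarith
  have key := arctan_add hxy
  rw [arctan_neg] at key
  rw [angleStep, sub_eq_add_neg, key]
  congr 1
  have h2 : 1 - ((p : ℝ) + 1) / M * (-(p / M)) = ((M : ℝ) ^ 2 + p * (p + 1)) / M ^ 2 := by
    field_simp
    ring
  rw [h2]
  have h1 : (M : ℝ) ^ 2 + p * (p + 1) ≠ 0 := by positivity
  field_simp
  ring

lemma angleStep_antitone {M : ℕ} (hM : 0 < M) : Antitone (angleStep M) := by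
  intro a b hab
  rw [angleStep_eq hM, angleStep_eq hM]
  have hM' : (0 : ℝ) < M := by exact_mod_cast hM
  have hab' : (a : ℝ) ≤ b := by exact_mod_cast hab
  apply arctan_strictMono.monotone
  gcongr

lemma angleStep_nonneg {M : ℕ} (hM : 0 < M) (p : ℕ) : 0 ≤ angleStep M p := by
  rw [angleStep_eq hM]
  exact arctan_nonneg.mpr (by positivity)

lemma two_mul_alternating_sum (g : ℕ → ℝ) (M : ℕ) :
    2 * ∑ p ∈ Finset.range M, (-1 : ℝ) ^ p * g p =
      g 0 - (-1) ^ M * g M - ∑ p ∈ Finset.range M, (-1 : ℝ) ^ p * (g (p + 1) - g p) := by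
  induction M with
  | zero => simp
  | succ n ih =>
    rw [Finset.sum_range_succ, Finset.sum_range_succ, mul_add, ih, pow_succ]
    ring

lemma latticeAngle_swap {M : ℕ} (hM : 0 < M) (p : ℕ) :
    latticeAngle p M - latticeAngle M p = π / 2 - 2 * arctan ((p : ℝ) / M) := by
  rcases Nat.eq_zero_or_pos p with rfl | hp
  · simp [latticeAngle, hM.ne']
  · have hpos : (0 : ℝ) < (p : ℝ) / M := by positivity
    have := arctan_inv_of_pos hpos
    rw [inv_div] at this
    simp only [latticeAngle, hp.ne', hM.ne', if_false, this]
    ring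

lemma square_sum_eq (N : ℕ) :
    ∑ pq ∈ (Finset.range (N + 1) ×ˢ Finset.range (N + 1)).erase (0, 0),
        (-1 : ℝ) ^ (pq.1 + pq.2 + 1) *
          arctan (((pq.1 : ℝ) + (pq.2 : ℝ) + 1) /
            ((pq.1 : ℝ) * ((pq.1 : ℝ) + 1) + (pq.2 : ℝ) * ((pq.2 : ℝ) + 1))) =
      π / 4 + (-1) ^ (N + 1) *
        ∑ p ∈ Finset.range (N + 1), (-1 : ℝ) ^ p * angleStep (N + 1) p := by
  set s : ℕ → ℕ → ℝ := fun m n => (-1) ^ (m + n) * latticeAngle m n with hs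
  have hterm : ∀ pq ∈ (Finset.range (N + 1) ×ˢ Finset.range (N + 1)).erase (0, 0),
      (-1 : ℝ) ^ (pq.1 + pq.2 + 1) *
          arctan (((pq.1 : ℝ) + (pq.2 : ℝ) + 1) /
            ((pq.1 : ℝ) * ((pq.1 : ℝ) + 1) + (pq.2 : ℝ) * ((pq.2 : ℝ) + 1))) =
        s pq.1 (pq.2 + 1) - s (pq.1 + 1) pq.2 := by
    rintro ⟨p, q⟩ hpq
    rw [arctan_eq_angle_sub p q (Finset.mem_erase.mp hpq).1]
    simp only [hs]
    rw [show p + 1 + q = p + q + 1 by ring, show p + (q + 1) = p + q + 1 by ring]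
    ring
  rw [Finset.sum_congr rfl hterm, Finset.sum_erase_eq_sub (by simp), Finset.sum_product,
    sum_square_telescope]
  have hcorner : s 0 (0 + 1) - s (0 + 1) 0 = -(π / 2) := by simp [hs, latticeAngle]
  have haxes : ∑ n ∈ Finset.range (N + 1), (s 0 n - s n 0) =
      ∑ n ∈ Finset.range (N + 1), (-1 : ℝ) ^ n * (π / 2) - π / 2 := by
    rw [Finset.sum_range_succ', Finset.sum_range_succ']
    simp [hs, latticeAngle]
  have hsides : ∑ p ∈ Finset.range (N + 1), (s p (N + 1) - s (N + 1) p) =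
      (-1) ^ (N + 1) * ∑ p ∈ Finset.range (N + 1),
        (-1 : ℝ) ^ p * (π / 2 - 2 * arctan ((p : ℝ) / (N + 1 : ℕ))) := by
    rw [Finset.mul_sum]
    refine Finset.sum_congr rfl fun p _ => ?_
    rw [← latticeAngle_swap N.succ_pos p]
    simp only [hs, pow_add]
    ring
  have hA := two_mul_alternating_sum (fun _ => π / 2) (N + 1)
  have hB := two_mul_alternating_sum
    (fun p => π / 2 - 2 * arctan ((p : ℝ) / (N + 1 : ℕ))) (N + 1)
  have hstep : ∑ p ∈ Finset.range (N + 1), (-1 : ℝ) ^ p *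
      ((π / 2 - 2 * arctan (((p + 1 : ℕ) : ℝ) / (N + 1 : ℕ))) -
        (π / 2 - 2 * arctan ((p : ℝ) / (N + 1 : ℕ)))) =
      -2 * ∑ p ∈ Finset.range (N + 1), (-1 : ℝ) ^ p * angleStep (N + 1) p := by
    rw [Finset.mul_sum]
    refine Finset.sum_congr rfl fun p _ => ?_
    rw [angleStep]
    push_cast
    ring
  have hone : ((N + 1 : ℕ) : ℝ) / (N + 1 : ℕ) = 1 := div_self (by positivity)
  simp only [sub_self, mul_zero, Finset.sum_const_zero, sub_zero] at hA
  simp only [hstep, hone, arctan_one, Nat.cast_zero, zero_div, arctan_zero] at hB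
  rw [hcorner, haxes, hsides]
  linear_combination (1 / 2 : ℝ) * hA + (1 / 2 : ℝ) * (-1) ^ (N + 1) * hB

theorem arctan_double_sum_eq_pi_div_four :
    Tendsto (fun N : ℕ =>
      ∑ pq ∈ (Finset.range (N + 1) ×ˢ Finset.range (N + 1)).erase (0, 0),
        (-1 : ℝ) ^ (pq.1 + pq.2 + 1) *
          Real.arctan (((pq.1 : ℝ) + (pq.2 : ℝ) + 1) /
            ((pq.1 : ℝ) * ((pq.1 : ℝ) + 1) + (pq.2 : ℝ) * ((pq.2 : ℝ) + 1))))
      atTop (nhds (π / 4)) := by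
  simp only [square_sum_eq]
  have hd : Tendsto (fun N : ℕ => arctan (1 / ((N : ℝ) + 1))) atTop (nhds 0) := by
    have := (continuous_arctan.tendsto 0).comp (tendsto_one_div_add_atTop_nhds_zero_nat (𝕜 := ℝ))
    rwa [arctan_zero] at this
  have herr : Tendsto (fun N : ℕ => (-1 : ℝ) ^ (N + 1) *
      ∑ p ∈ Finset.range (N + 1), (-1 : ℝ) ^ p * angleStep (N + 1) p) atTop (nhds 0) := by
    refine squeeze_zero_norm (fun N => ?_) hd
    obtain ⟨h0, h1⟩ := alternating_sum_bounds (N + 1) (angleStep (N + 1))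
      (angleStep_antitone N.succ_pos) (angleStep_nonneg N.succ_pos)
    rw [norm_mul, norm_pow, norm_neg, norm_one, one_pow, one_mul, Real.norm_of_nonneg h0]
    refine h1.trans (le_of_eq ?_)
    simp [angleStep]
  simpa using herr.const_add (π / 4)
end
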